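/- Theorem 5, first part (linear convergence of the PD3O algorithm): Suppose F is μ_F-strongly convex and R is μ_R-strongly convex with μ_F + μ_R > 0, and H is differentiable with L_H-Lipschitz gradient for some L_H > 0. Let x* be the unique minimizer of Ψ and let u* = ∇H(Kx*) be the unique dual solution. Suppose γ_k ≡ γ ∈ (0, 2/L_F) and η ≥ ‖K‖². Then the PD3O algorithm converges linearly: there exists ρ ∈ (0,1] such that for every k ≥ 0, ‖x^{k+1} − x*‖² ≤ (1−ρ)^k · (‖γq⁰ − x* + γ∇F(x*) − γK*(u⁰ − u*)‖² + γ²η‖u⁰ − u*‖² − γ²‖K*(u⁰ − u*)‖²). -/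

import Mathlib

/-!
One iteration decreases the energy
`V = ‖z - γ K* v‖² + γ² (η ‖v‖² - ‖K* v‖²)`, where `z = γ q - x* + γ ∇F(x*)` and `v = u - u*`.
Expanding the squares, the decrease is the gain of the gradient step on `F`, plus a monotonicity gap
of `∂R`, plus a monotonicity gap of `∇H`, plus terms that are nonnegative because `‖K‖² ≤ η`.
Strong convexity of `F` or `R` makes the first two gaps dominate `‖x⁺ - x*‖²`, cocoercivity of `∇H`
makes the third dominate `‖u⁺ - u*‖²`, and the new energy is itself at most a combination of these
two squares. So `(1 + c) V⁺ ≤ V` for some `c > 0`, and `ρ = c / (1 + c)` works.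
-/

open Filter Topology RealInnerProductSpace

noncomputable section

/-- `p` is a minimizer of `y ↦ σ·G(y) + (1/2)‖y − z‖²`, i.e. `p = prox_{σG}(z)`
(the minimizer is unique when `G` is convex). -/
def IsProxPt {E : Type*} [NormedAddCommGroup E] [InnerProductSpace ℝ E]
    (σ : ℝ) (G : E → ℝ) (z p : E) : Prop :=
  ∀ y, σ * G p + ‖p - z‖ ^ 2 / 2 ≤ σ * G y + ‖y - z‖ ^ 2 / 2

/-- `u ∈ ∂G(z)`. -/
def IsSubgradientAt {E : Type*} [NormedAddCommGroup E] [InnerProductSpace ℝ E]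
    (G : E → ℝ) (z u : E) : Prop :=
  ∀ y, G z + ⟪u, y - z⟫ ≤ G y

section Subgradient

variable {E : Type*} [NormedAddCommGroup E] [InnerProductSpace ℝ E]
  {G : E → ℝ} {x y z p r s : E} {μ σ C : ℝ}

-- On the segment `x + t (y - x)` the error is of order `t²`, so it vanishes after division by `t`.
theorem isSubgradientAt_of_quadratic_error (hG : ConvexOn ℝ Set.univ G)
    (h : ∀ y, G x + ⟪r, y - x⟫ ≤ G y + C * ‖y - x‖ ^ 2) : IsSubgradientAt G x r := by
  intro y
  have hlim : Tendsto (fun t : ℝ => G y + t * (C * ‖y - x‖ ^ 2)) (𝓝[>] 0) (𝓝 (G y)) := by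
    refine Tendsto.mono_left ?_ nhdsWithin_le_nhds
    exact Continuous.tendsto' (by fun_prop) _ _ (by simp)
  refine ge_of_tendsto hlim ?_
  filter_upwards [Ioo_mem_nhdsGT zero_lt_one] with t ⟨ht0, ht1⟩
  have hquad := h (x + t • (y - x))
  have hconv := hG.2 (Set.mem_univ x) (Set.mem_univ y) (sub_nonneg.2 ht1.le) ht0.le (by ring)
  rw [show (1 - t) • x + t • y = x + t • (y - x) by module, smul_eq_mul, smul_eq_mul] at hconv
  rw [add_sub_cancel_left, real_inner_smul_right, norm_smul, mul_pow, Real.norm_eq_abs,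
    sq_abs] at hquad
  refine le_of_mul_le_mul_left ?_ ht0
  linarith

theorem IsSubgradientAt.add_sq_le_of_strongConvexOn (hr : IsSubgradientAt G x r)
    (hG : StrongConvexOn Set.univ μ G) (y : E) :
    G x + ⟪r, y - x⟫ + μ / 2 * ‖y - x‖ ^ 2 ≤ G y := by
  have hexp (y : E) : ‖y‖ ^ 2 = ‖x‖ ^ 2 + 2 * ⟪x, y - x⟫ + ‖y - x‖ ^ 2 := by
    rw [← norm_add_sq_real, add_sub_cancel]
  have hsub : IsSubgradientAt (fun y => G y - μ / 2 * ‖y‖ ^ 2) x (r - μ • x) := by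
    refine isSubgradientAt_of_quadratic_error (C := μ / 2) (strongConvexOn_iff_convex.1 hG)
      fun y => ?_
    rw [inner_sub_left, real_inner_smul_left, hexp y]
    linarith [hr y]
  have hy : G x - μ / 2 * ‖x‖ ^ 2 + ⟪r - μ • x, y - x⟫ ≤ G y - μ / 2 * ‖y‖ ^ 2 := hsub y
  rw [inner_sub_left, real_inner_smul_left, hexp y] at hy
  linarith

theorem IsSubgradientAt.mul_sq_norm_sub_le_inner (hr : IsSubgradientAt G x r)
    (hs : IsSubgradientAt G y s) (hG : StrongConvexOn Set.univ μ G) :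
    μ * ‖x - y‖ ^ 2 ≤ ⟪x - y, r - s⟫ := by
  have hxy := hr.add_sq_le_of_strongConvexOn hG y
  have hyx := hs.add_sq_le_of_strongConvexOn hG x
  rw [← neg_sub x y, inner_neg_right, norm_neg] at hxy
  rw [real_inner_comm, inner_sub_left]
  linarith

theorem IsProxPt.isSubgradientAt (h : IsProxPt σ G z p) (hG : ConvexOn ℝ Set.univ G)
    (hσ : 0 < σ) : IsSubgradientAt G p (σ⁻¹ • (z - p)) := by
  refine isSubgradientAt_of_quadratic_error (C := σ⁻¹ / 2) hG fun y => ?_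
  have hy := h y
  have hexp : ‖y - z‖ ^ 2 = ‖y - p‖ ^ 2 - 2 * ⟪z - p, y - p⟫ + ‖p - z‖ ^ 2 := by
    rw [← sub_sub_sub_cancel_right y z p, norm_sub_sq_real, norm_sub_rev z p, real_inner_comm]
  rw [hexp] at hy
  rw [real_inner_smul_left]
  refine le_of_mul_le_mul_left ?_ hσ
  field_simp
  linarith

end Subgradient

section Gradient

variable {E : Type*} [NormedAddCommGroup E] [InnerProductSpace ℝ E] [CompleteSpace E]
  {G : E → ℝ} {G' : E → E} {x g r : E} {L μ γ : ℝ}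

theorem hasDerivAt_comp_lineMap_of_hasGradientAt {y : E} {t : ℝ}
    (hg : HasGradientAt G g (AffineMap.lineMap x y t)) :
    HasDerivAt (fun t : ℝ => G (AffineMap.lineMap x y t)) ⟪g, y - x⟫ t :=
  hg.hasFDerivAt.comp_hasDerivAt t AffineMap.hasDerivAt_lineMap

theorem isSubgradientAt_of_hasGradientAt (hG : ConvexOn ℝ Set.univ G) (hg : HasGradientAt G g x) :
    IsSubgradientAt G x g := by
  intro y
  have hline : ConvexOn ℝ Set.univ fun t : ℝ => G (AffineMap.lineMap x y t) :=
    hG.comp_affineMap (AffineMap.lineMap x y)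
  have hderiv : HasDerivAt (fun t : ℝ => G (AffineMap.lineMap x y t)) ⟪g, y - x⟫ 0 :=
    hasDerivAt_comp_lineMap_of_hasGradientAt (by simpa using hg)
  have hslope := hline.le_slope_of_hasDerivAt (Set.mem_univ 0) (Set.mem_univ 1) one_pos hderiv
  simp only [slope_def_field, AffineMap.lineMap_apply_one, AffineMap.lineMap_apply_zero, sub_zero,
    div_one] at hslope
  linarith

theorem IsSubgradientAt.eq_of_hasGradientAt (hr : IsSubgradientAt G x r)
    (hg : HasGradientAt G g x) : r = g := by
  have hmin : IsLocalMin (fun y => G y - ⟪r, y⟫) x := .of_forall fun y => by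
    have hy := hr y
    rw [inner_sub_right] at hy
    linarith
  have hzero := hmin.hasFDerivAt_eq_zero (hg.hasFDerivAt.sub (innerSL ℝ r).hasFDerivAt)
  refine (ext_inner_right ℝ fun v => ?_).symm
  simpa [sub_eq_zero] using DFunLike.congr_fun hzero v

theorem abs_sub_sub_inner_le_of_lipschitz_gradient (hg : ∀ z, HasGradientAt G (G' z) z)
    (hL : ∀ z z', ‖G' z - G' z'‖ ≤ L * ‖z - z'‖) (x y : E) :
    |G y - G x - ⟪G' x, y - x⟫| ≤ L / 2 * ‖y - x‖ ^ 2 := by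
  let c (t : ℝ) : E := AffineMap.lineMap x y t
  have hderiv (t : ℝ) : HasDerivAt (fun t => G (c t) - G x - t * ⟪G' x, y - x⟫)
      (⟪G' (c t) - G' x, y - x⟫) t := by
    rw [inner_sub_left]
    exact ((hasDerivAt_comp_lineMap_of_hasGradientAt (hg _)).sub_const _).sub
      (hasDerivAt_mul_const _)
  have hbound (t : ℝ) : HasDerivAt (fun t => L / 2 * ‖y - x‖ ^ 2 * t ^ 2)
      (L * ‖y - x‖ ^ 2 * t) t := by
    convert! (hasDerivAt_pow 2 t).const_mul (L / 2 * ‖y - x‖ ^ 2) using 1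
    norm_num
    ring
  have hle (t : ℝ) (ht : 0 ≤ t) : ‖⟪G' (c t) - G' x, y - x⟫‖ ≤ L * ‖y - x‖ ^ 2 * t :=
    calc ‖⟪G' (c t) - G' x, y - x⟫‖
        ≤ ‖G' (c t) - G' x‖ * ‖y - x‖ := norm_inner_le_norm _ _
      _ ≤ L * ‖c t - x‖ * ‖y - x‖ := by gcongr; exact hL _ _
      _ = L * ‖y - x‖ ^ 2 * t := by
        rw [← dist_eq_norm (c t), dist_lineMap_left, Real.norm_of_nonneg ht, dist_comm,
          dist_eq_norm]
        ring
  simpa [c] using image_norm_le_of_norm_deriv_right_le_deriv_boundary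
    (fun t _ => (hderiv t).continuousAt.continuousWithinAt)
    (fun t _ => (hderiv t).hasDerivWithinAt) (by simp [c]) hbound
    (fun t ht => hle t ht.1) (Set.right_mem_Icc.2 zero_le_one)

-- Compare the tangent plane at `x` with the upper quadratic model at `y`, at the point where a
-- gradient step of length `1 / L` from `y` leads for `G - ⟪G' x, ·⟫`.
theorem add_inner_add_sq_norm_gradient_sub_le (hG : ConvexOn ℝ Set.univ G)
    (hg : ∀ z, HasGradientAt G (G' z) z) (hL0 : 0 < L)
    (hL : ∀ z z', ‖G' z - G' z'‖ ≤ L * ‖z - z'‖) (x y : E) :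
    G x + ⟪G' x, y - x⟫ + (2 * L)⁻¹ * ‖G' x - G' y‖ ^ 2 ≤ G y := by
  set d := G' x - G' y with hd
  have hlower := isSubgradientAt_of_hasGradientAt hG (hg x) (y + L⁻¹ • d)
  have hupper := (abs_le.1 (abs_sub_sub_inner_le_of_lipschitz_gradient hg hL y (y + L⁻¹ • d))).2
  have hinner : ⟪G' x, d⟫ = ⟪G' y, d⟫ + ‖d‖ ^ 2 := by
    rw [← real_inner_self_eq_norm_sq, ← inner_add_left, hd, add_sub_cancel]
  rw [add_sub_right_comm, inner_add_right, real_inner_smul_right, hinner] at hlower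
  rw [add_sub_cancel_left, real_inner_smul_right, norm_smul, mul_pow, Real.norm_eq_abs,
    sq_abs] at hupper
  have hmodel : L / 2 * (L⁻¹ ^ 2 * ‖d‖ ^ 2) = (2 * L)⁻¹ * ‖d‖ ^ 2 := by field_simp
  have hgain : L⁻¹ * ‖d‖ ^ 2 = 2 * ((2 * L)⁻¹ * ‖d‖ ^ 2) := by field_simp
  linarith

theorem sq_norm_gradient_sub_le_mul_inner (hG : ConvexOn ℝ Set.univ G)
    (hg : ∀ z, HasGradientAt G (G' z) z) (hL0 : 0 < L)
    (hL : ∀ z z', ‖G' z - G' z'‖ ≤ L * ‖z - z'‖) (x y : E) :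
    ‖G' x - G' y‖ ^ 2 ≤ L * ⟪x - y, G' x - G' y⟫ := by
  have hxy := add_inner_add_sq_norm_gradient_sub_le hG hg hL0 hL x y
  have hyx := add_inner_add_sq_norm_gradient_sub_le hG hg hL0 hL y x
  rw [← neg_sub x y, inner_neg_right] at hxy
  rw [norm_sub_rev (G' y)] at hyx
  rw [← inv_mul_le_iff₀ hL0, real_inner_comm, inner_sub_left]
  have hsplit : L⁻¹ * ‖G' x - G' y‖ ^ 2 = 2 * ((2 * L)⁻¹ * ‖G' x - G' y‖ ^ 2) := by field_simp
  linarith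

theorem sq_norm_sub_sub_smul_gradient_le (hG : StrongConvexOn Set.univ μ G) (hμ : 0 ≤ μ)
    (hg : ∀ z, HasGradientAt G (G' z) z) (hL0 : 0 < L)
    (hL : ∀ z z', ‖G' z - G' z'‖ ≤ L * ‖z - z'‖) (hγ : 0 ≤ γ) (hγL : γ * L ≤ 2) (x y : E) :
    ‖(x - y) - γ • (G' x - G' y)‖ ^ 2 ≤ (1 - γ * (2 - γ * L) * μ) * ‖x - y‖ ^ 2 := by
  have hconv : ConvexOn ℝ Set.univ G := hG.convexOn fun t => by positivity
  have hmono : μ * ‖x - y‖ ^ 2 ≤ ⟪x - y, G' x - G' y⟫ :=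
    (isSubgradientAt_of_hasGradientAt hconv (hg x)).mul_sq_norm_sub_le_inner
      (isSubgradientAt_of_hasGradientAt hconv (hg y)) hG
  have hcoco := sq_norm_gradient_sub_le_mul_inner hconv hg hL0 hL x y
  calc ‖(x - y) - γ • (G' x - G' y)‖ ^ 2
      = ‖x - y‖ ^ 2 - 2 * γ * ⟪x - y, G' x - G' y⟫ + γ ^ 2 * ‖G' x - G' y‖ ^ 2 := by
        rw [norm_sub_sq_real, real_inner_smul_right, norm_smul, mul_pow, Real.norm_eq_abs, sq_abs]
        ring
    _ ≤ ‖x - y‖ ^ 2 - 2 * γ * ⟪x - y, G' x - G' y⟫ + γ ^ 2 * (L * ⟪x - y, G' x - G' y⟫) := by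
        gcongr
    _ = ‖x - y‖ ^ 2 - γ * (2 - γ * L) * ⟪x - y, G' x - G' y⟫ := by ring
    _ ≤ ‖x - y‖ ^ 2 - γ * (2 - γ * L) * (μ * ‖x - y‖ ^ 2) := by
        have : 0 ≤ 2 - γ * L := sub_nonneg.2 hγL
        gcongr
    _ = (1 - γ * (2 - γ * L) * μ) * ‖x - y‖ ^ 2 := by ring

end Gradient

section Energy

variable {𝒳 𝒰 : Type*} [NormedAddCommGroup 𝒳] [InnerProductSpace ℝ 𝒳] [CompleteSpace 𝒳]
  [NormedAddCommGroup 𝒰] [InnerProductSpace ℝ 𝒰] [CompleteSpace 𝒰]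
  {K : 𝒳 →L[ℝ] 𝒰} {γ η c : ℝ}

theorem sq_norm_adjoint_apply_le (hη : ‖K‖ ^ 2 ≤ η) (v : 𝒰) :
    ‖ContinuousLinearMap.adjoint K v‖ ^ 2 ≤ η * ‖v‖ ^ 2 := by
  have hop := (ContinuousLinearMap.adjoint K).le_opNorm v
  rw [LinearIsometryEquiv.norm_map] at hop
  calc ‖ContinuousLinearMap.adjoint K v‖ ^ 2 ≤ (‖K‖ * ‖v‖) ^ 2 := by gcongr
    _ = ‖K‖ ^ 2 * ‖v‖ ^ 2 := mul_pow _ _ _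
    _ ≤ η * ‖v‖ ^ 2 := by gcongr

/-- The Lyapunov function of PD3O, as a function of the error `z = γ q - x* + γ ∇F(x*)` of the
variable `q` and of the dual error `v = u - u*`. -/
def pd3oEnergy (K : 𝒳 →L[ℝ] 𝒰) (γ η : ℝ) (z : 𝒳) (v : 𝒰) : ℝ :=
  ‖z - γ • ContinuousLinearMap.adjoint K v‖ ^ 2 + γ ^ 2 * η * ‖v‖ ^ 2
    - γ ^ 2 * ‖ContinuousLinearMap.adjoint K v‖ ^ 2

theorem pd3oEnergy_le (hη : ‖K‖ ^ 2 ≤ η) (z : 𝒳) (v : 𝒰) :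
    pd3oEnergy K γ η z v ≤ 2 * ‖z‖ ^ 2 + 2 * γ ^ 2 * η * ‖v‖ ^ 2 := by
  have hpar := parallelogram_law_with_norm ℝ z (γ • ContinuousLinearMap.adjoint K v)
  have hsq : ‖γ • ContinuousLinearMap.adjoint K v‖ ^ 2
      = γ ^ 2 * ‖ContinuousLinearMap.adjoint K v‖ ^ 2 := by
    rw [norm_smul, mul_pow, Real.norm_eq_abs, sq_abs]
  have hadj := mul_le_mul_of_nonneg_left (sq_norm_adjoint_apply_le hη v) (sq_nonneg γ)
  have hplus := sq_nonneg ‖z + γ • ContinuousLinearMap.adjoint K v‖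
  rw [pd3oEnergy]
  linarith

-- `z + γ r + γ K* v` is the form `γ q - x* + γ ∇F(x*)` takes by the primal optimality condition,
-- with `z = x⁺ - x*` and `r` a difference of subgradients of `R` at `x⁺` and at `x*`.
theorem sq_norm_le_pd3oEnergy (hη : ‖K‖ ^ 2 ≤ η) {z r : 𝒳} (hr : 0 ≤ γ * ⟪z, r⟫) (v : 𝒰) :
    ‖z‖ ^ 2 ≤ pd3oEnergy K γ η (z + γ • r + γ • ContinuousLinearMap.adjoint K v) v := by
  have hadj := mul_le_mul_of_nonneg_left (sq_norm_adjoint_apply_le hη v) (sq_nonneg γ)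
  have hsq := sq_nonneg ‖γ • r‖
  rw [pd3oEnergy, add_sub_cancel_right, norm_add_sq_real, real_inner_smul_right]
  linarith

theorem pd3oEnergy_eq_add (z z' r : 𝒳) (v v' : 𝒰) :
    pd3oEnergy K γ η (z + γ • r + γ • ContinuousLinearMap.adjoint K v) v
      = pd3oEnergy K γ η z' v' + (‖z‖ ^ 2 - ‖z'‖ ^ 2) + 2 * γ * ⟪z, r⟫
        + 2 * γ * ⟪K (z' - γ • r - γ • ContinuousLinearMap.adjoint K v)
          - (γ * η) • (v' - v), v'⟫
        + γ ^ 2 * ‖r + ContinuousLinearMap.adjoint K v'‖ ^ 2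
        + γ ^ 2 * (η * ‖v' - v‖ ^ 2 - ‖ContinuousLinearMap.adjoint K (v' - v)‖ ^ 2) := by
  rw [pd3oEnergy, pd3oEnergy, add_sub_cancel_right, inner_sub_left (K _),
    ← ContinuousLinearMap.adjoint_inner_right, map_sub]
  generalize ContinuousLinearMap.adjoint K v = a
  generalize ContinuousLinearMap.adjoint K v' = a'
  simp only [← real_inner_self_eq_norm_sq, inner_add_left, inner_add_right, inner_sub_left,
    inner_sub_right, real_inner_smul_left, real_inner_smul_right]
  rw [real_inner_comm z r, real_inner_comm z' a', real_inner_comm r a', real_inner_comm a a',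
    real_inner_comm v v']
  ring

theorem one_add_mul_pd3oEnergy_le (hη : ‖K‖ ^ 2 ≤ η) (hγ : 0 ≤ γ) (hc : 0 ≤ c) {z z' r : 𝒳}
    {v v' : 𝒰} (hprimal : 2 * c * ‖z‖ ^ 2 ≤ ‖z‖ ^ 2 - ‖z'‖ ^ 2 + 2 * γ * ⟪z, r⟫)
    (hz' : ‖z'‖ ≤ ‖z‖)
    (hdual : c * γ * (η * ‖v'‖ ^ 2)
      ≤ ⟪K (z' - γ • r - γ • ContinuousLinearMap.adjoint K v) - (γ * η) • (v' - v), v'⟫) :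
    (1 + c) * pd3oEnergy K γ η z' v'
      ≤ pd3oEnergy K γ η (z + γ • r + γ • ContinuousLinearMap.adjoint K v) v := by
  have hnew : pd3oEnergy K γ η z' v' ≤ 2 * ‖z‖ ^ 2 + 2 * γ ^ 2 * η * ‖v'‖ ^ 2 := by
    refine (pd3oEnergy_le hη z' v').trans ?_
    gcongr
  have hadj : 0 ≤ γ ^ 2 * (η * ‖v' - v‖ ^ 2 - ‖ContinuousLinearMap.adjoint K (v' - v)‖ ^ 2) :=
    mul_nonneg (sq_nonneg γ) (sub_nonneg.2 (sq_norm_adjoint_apply_le hη _))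
  have hsq : 0 ≤ γ ^ 2 * ‖r + ContinuousLinearMap.adjoint K v'‖ ^ 2 := by positivity
  have hgain := mul_le_mul_of_nonneg_left hnew hc
  have hdual' := mul_le_mul_of_nonneg_left hdual (by positivity : 0 ≤ 2 * γ)
  rw [pd3oEnergy_eq_add z z' r v v']
  linarith

end Energy

/-- `(x, q, u)` is a run of the PD3O iteration with constant step size `γ` and parameter `η`, for
the gradient `F'` of `F`. The dual update is the proximal point of the conjugate of `H`, expressed
through a proximal point of `H` by Moreau's identity. The value `x 0` is unconstrained. -/
structure IsPD3O {𝒳 𝒰 : Type*} [NormedAddCommGroup 𝒳] [InnerProductSpace ℝ 𝒳] [CompleteSpace 𝒳]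
    [NormedAddCommGroup 𝒰] [InnerProductSpace ℝ 𝒰] [CompleteSpace 𝒰]
    (K : 𝒳 →L[ℝ] 𝒰) (F' : 𝒳 → 𝒳) (R : 𝒳 → ℝ) (H : 𝒰 → ℝ) (γ η : ℝ)
    (x q : ℕ → 𝒳) (u : ℕ → 𝒰) : Prop where
  primal_step (k : ℕ) :
    IsProxPt γ R (γ • (q k - ContinuousLinearMap.adjoint K (u k))) (x (k + 1))
  gradient_step (k : ℕ) : q (k + 1) = (1 / γ) • x (k + 1) - F' (x (k + 1))
  dual_step (k : ℕ) : ∃ p,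
    IsProxPt (γ * η) H
        ((γ * η) • (u k + (1 / η) • K ((1 / γ) • x (k + 1) + q (k + 1) - q k))) p ∧
      u (k + 1) = (u k + (1 / η) • K ((1 / γ) • x (k + 1) + q (k + 1) - q k))
        - (1 / (γ * η)) • p

namespace IsPD3O

variable {𝒳 𝒰 : Type*} [NormedAddCommGroup 𝒳] [InnerProductSpace ℝ 𝒳] [CompleteSpace 𝒳]
  [NormedAddCommGroup 𝒰] [InnerProductSpace ℝ 𝒰] [CompleteSpace 𝒰]
  {K : 𝒳 →L[ℝ] 𝒰} {F R : 𝒳 → ℝ} {H : 𝒰 → ℝ} {F' : 𝒳 → 𝒳} {H' : 𝒰 → 𝒰}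
  {L_F L_H μF μR γ η c : ℝ} {xstar : 𝒳} {x q : ℕ → 𝒳} {u : ℕ → 𝒰}

theorem smul_q_succ (h : IsPD3O K F' R H γ η x q u) (hγ : γ ≠ 0) (k : ℕ) :
    γ • q (k + 1) = x (k + 1) - γ • F' (x (k + 1)) := by
  rw [h.gradient_step, smul_sub, smul_smul, mul_one_div_cancel hγ, one_smul]

theorem exists_isSubgradientAt (h : IsPD3O K F' R H γ η x q u) (hR : ConvexOn ℝ Set.univ R)
    (hγ : 0 < γ) (k : ℕ) :
    ∃ r, IsSubgradientAt R (x (k + 1)) r ∧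
      x (k + 1) + γ • r = γ • q k - γ • ContinuousLinearMap.adjoint K (u k) := by
  refine ⟨_, (h.primal_step k).isSubgradientAt hR hγ, ?_⟩
  rw [smul_inv_smul₀ hγ.ne', add_sub_cancel, smul_sub]

theorem u_succ_eq (h : IsPD3O K F' R H γ η x q u) (hH : ConvexOn ℝ Set.univ H)
    (hHgrad : ∀ v, HasGradientAt H (H' v) v) (hγ : 0 < γ) (hη : 0 < η) (k : ℕ) :
    u (k + 1) =
      H' (K (x (k + 1) + γ • q (k + 1) - γ • q k) - (γ * η) • (u (k + 1) - u k)) := by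
  obtain ⟨p, hp, hu⟩ := h.dual_step k
  have hγη : 0 < γ * η := mul_pos hγ hη
  have hgrad : u (k + 1) = H' p := by
    rw [← (hp.isSubgradientAt hH hγη).eq_of_hasGradientAt (hHgrad p), hu, smul_sub,
      inv_smul_smul₀ hγη.ne', one_div (γ * η)]
  have hp_eq : p = K (x (k + 1) + γ • q (k + 1) - γ • q k) - (γ * η) • (u (k + 1) - u k) := by
    rw [hu, map_sub, map_sub, map_add, map_add, map_smul, map_smul, map_smul]
    match_scalars <;> field_simp <;> ring
  rwa [← hp_eq]

theorem mul_sq_norm_dual_error_le_inner (h : IsPD3O K F' R H γ η x q u)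
    (hH : ConvexOn ℝ Set.univ H) (hHgrad : ∀ v, HasGradientAt H (H' v) v) (hLH : 0 < L_H)
    (hHlip : ∀ v v', ‖H' v - H' v'‖ ≤ L_H * ‖v - v'‖) (hγ : 0 < γ) (hη : ‖K‖ ^ 2 ≤ η)
    (hc0 : 0 ≤ c) (hc : c * γ * (η * L_H) ≤ 1) (y : 𝒳) (k : ℕ) :
    c * γ * (η * ‖u (k + 1) - H' (K y)‖ ^ 2)
      ≤ ⟪K (x (k + 1) + γ • q (k + 1) - γ • q k - y) - (γ * η) • (u (k + 1) - u k),
          u (k + 1) - H' (K y)⟫ := by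
  rcases ((sq_nonneg ‖K‖).trans hη).eq_or_lt with rfl | hη0
  · -- The dual update is meaningless for `η = 0`, but then `K = 0`.
    have hK : K = 0 := by simpa using hη
    simp [hK]
  · have hcoco := sq_norm_gradient_sub_le_mul_inner hH hHgrad hLH hHlip
      (K (x (k + 1) + γ • q (k + 1) - γ • q k) - (γ * η) • (u (k + 1) - u k)) (K y)
    rw [← h.u_succ_eq hH hHgrad hγ hη0, sub_right_comm, ← map_sub] at hcoco
    set w := ⟪K (x (k + 1) + γ • q (k + 1) - γ • q k - y) - (γ * η) • (u (k + 1) - u k),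
      u (k + 1) - H' (K y)⟫
    have hw : 0 ≤ w := nonneg_of_mul_nonneg_right ((sq_nonneg _).trans hcoco) hLH
    calc c * γ * (η * ‖u (k + 1) - H' (K y)‖ ^ 2)
        ≤ c * γ * (η * (L_H * w)) := by gcongr
      _ = c * γ * (η * L_H) * w := by ring
      _ ≤ w := mul_le_of_le_one_left hw hc

theorem exists_primal_error (h : IsPD3O K F' R H γ η x q u) (hR : StrongConvexOn Set.univ μR R)
    (hμR : 0 ≤ μR) (hγ : 0 < γ) {ustar : 𝒰}
    (hopt : IsSubgradientAt R xstar (-(F' xstar + ContinuousLinearMap.adjoint K ustar)))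
    (k : ℕ) :
    ∃ r, μR * ‖x (k + 1) - xstar‖ ^ 2 ≤ ⟪x (k + 1) - xstar, r⟫ ∧
      γ • q k - xstar + γ • F' xstar
        = x (k + 1) - xstar + γ • r + γ • ContinuousLinearMap.adjoint K (u k - ustar) := by
  obtain ⟨r, hr, hstep⟩ := h.exists_isSubgradientAt (hR.convexOn fun t => by positivity) hγ k
  refine ⟨_, hr.mul_sq_norm_sub_le_inner hopt hR, ?_⟩
  rw [map_sub]
  linear_combination (norm := module) -hstep

theorem sq_norm_sub_le_pd3oEnergy (h : IsPD3O K F' R H γ η x q u)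
    (hR : StrongConvexOn Set.univ μR R) (hμR : 0 ≤ μR) (hγ : 0 < γ) (hη : ‖K‖ ^ 2 ≤ η)
    {ustar : 𝒰}
    (hopt : IsSubgradientAt R xstar (-(F' xstar + ContinuousLinearMap.adjoint K ustar)))
    (k : ℕ) :
    ‖x (k + 1) - xstar‖ ^ 2
      ≤ pd3oEnergy K γ η (γ • q k - xstar + γ • F' xstar) (u k - ustar) := by
  obtain ⟨r, hr, hz⟩ := h.exists_primal_error hR hμR hγ hopt k
  rw [hz]
  exact sq_norm_le_pd3oEnergy hη (mul_nonneg hγ.le (le_trans (by positivity) hr)) _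

theorem one_add_mul_pd3oEnergy_succ_le (h : IsPD3O K F' R H γ η x q u) (hLF : 0 < L_F)
    (hFgrad : ∀ z, HasGradientAt F (F' z) z)
    (hFlip : ∀ z z', ‖F' z - F' z'‖ ≤ L_F * ‖z - z'‖)
    (hF : StrongConvexOn Set.univ μF F) (hR : StrongConvexOn Set.univ μR R)
    (hμF : 0 ≤ μF) (hμR : 0 ≤ μR)
    (hH : ConvexOn ℝ Set.univ H) (hHgrad : ∀ v, HasGradientAt H (H' v) v) (hLH : 0 < L_H)
    (hHlip : ∀ v v', ‖H' v - H' v'‖ ≤ L_H * ‖v - v'‖)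
    (hopt : IsSubgradientAt R xstar
      (-(F' xstar + ContinuousLinearMap.adjoint K (H' (K xstar)))))
    (hγ : 0 < γ) (hγL : γ * L_F ≤ 2) (hη : ‖K‖ ^ 2 ≤ η) (hc : 0 ≤ c)
    (hcμ : 2 * c ≤ γ * (2 - γ * L_F) * μF + 2 * γ * μR) (hcη : c * γ * (η * L_H) ≤ 1) (k : ℕ) :
    (1 + c) * pd3oEnergy K γ η (γ • q (k + 1) - xstar + γ • F' xstar)
        (u (k + 1) - H' (K xstar))
      ≤ pd3oEnergy K γ η (γ • q k - xstar + γ • F' xstar) (u k - H' (K xstar)) := by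
  obtain ⟨r, hr, hz⟩ := h.exists_primal_error hR hμR hγ hopt k
  have hz' : γ • q (k + 1) - xstar + γ • F' xstar
      = (x (k + 1) - xstar) - γ • (F' (x (k + 1)) - F' xstar) := by
    rw [h.smul_q_succ hγ.ne']
    module
  have hforward : ‖γ • q (k + 1) - xstar + γ • F' xstar‖ ^ 2
      ≤ (1 - γ * (2 - γ * L_F) * μF) * ‖x (k + 1) - xstar‖ ^ 2 := by
    rw [hz']
    exact sq_norm_sub_sub_smul_gradient_le hF hμF hFgrad hLF hFlip hγ.le hγL _ _
  have hdual := h.mul_sq_norm_dual_error_le_inner hH hHgrad hLH hHlip hγ hη hc hcη xstar k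
  have harg : x (k + 1) + γ • q (k + 1) - γ • q k - xstar
      = γ • q (k + 1) - xstar + γ • F' xstar - γ • r
        - γ • ContinuousLinearMap.adjoint K (u k - H' (K xstar)) := by
    linear_combination (norm := module) -hz
  rw [harg, ← sub_sub_sub_cancel_right (u (k + 1)) (u k) (H' (K xstar))] at hdual
  rw [hz]
  refine one_add_mul_pd3oEnergy_le hη hγ.le hc ?_ ?_ hdual
  · have hbackward := mul_le_mul_of_nonneg_left hr (by positivity : 0 ≤ 2 * γ)
    have hrate := mul_le_mul_of_nonneg_right hcμ (sq_nonneg ‖x (k + 1) - xstar‖)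
    linarith
  · have hgain : 0 ≤ γ * (2 - γ * L_F) * μF := by
      have : 0 ≤ 2 - γ * L_F := sub_nonneg.2 hγL
      positivity
    refine le_of_sq_le_sq ?_ (norm_nonneg _)
    exact hforward.trans (mul_le_of_le_one_left (sq_nonneg _) (sub_le_self _ hgain))

theorem sq_norm_sub_le_inv_pow_mul (h : IsPD3O K F' R H γ η x q u) (hLF : 0 < L_F)
    (hFgrad : ∀ z, HasGradientAt F (F' z) z)
    (hFlip : ∀ z z', ‖F' z - F' z'‖ ≤ L_F * ‖z - z'‖)
    (hF : StrongConvexOn Set.univ μF F) (hR : StrongConvexOn Set.univ μR R)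
    (hμF : 0 ≤ μF) (hμR : 0 ≤ μR)
    (hH : ConvexOn ℝ Set.univ H) (hHgrad : ∀ v, HasGradientAt H (H' v) v) (hLH : 0 < L_H)
    (hHlip : ∀ v v', ‖H' v - H' v'‖ ≤ L_H * ‖v - v'‖)
    (hopt : IsSubgradientAt R xstar
      (-(F' xstar + ContinuousLinearMap.adjoint K (H' (K xstar)))))
    (hγ : 0 < γ) (hγL : γ * L_F ≤ 2) (hη : ‖K‖ ^ 2 ≤ η) (hc : 0 ≤ c)
    (hcμ : 2 * c ≤ γ * (2 - γ * L_F) * μF + 2 * γ * μR) (hcη : c * γ * (η * L_H) ≤ 1) (k : ℕ) :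
    ‖x (k + 1) - xstar‖ ^ 2
      ≤ (1 + c)⁻¹ ^ k *
        pd3oEnergy K γ η (γ • q 0 - xstar + γ • F' xstar) (u 0 - H' (K xstar)) := by
  let V (k : ℕ) := pd3oEnergy K γ η (γ • q k - xstar + γ • F' xstar) (u k - H' (K xstar))
  have hdecay (k : ℕ) : V (k + 1) ≤ (1 + c)⁻¹ * V k := (le_inv_mul_iff₀ (by positivity)).2 <|
    h.one_add_mul_pd3oEnergy_succ_le hLF hFgrad hFlip hF hR hμF hμR hH hHgrad hLH hHlip hopt
      hγ hγL hη hc hcμ hcη k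
  calc ‖x (k + 1) - xstar‖ ^ 2 ≤ V k := h.sq_norm_sub_le_pd3oEnergy hR hμR hγ hη hopt k
    _ ≤ (1 + c)⁻¹ ^ k * V 0 := le_geom (by positivity) k fun k _ => hdecay k

end IsPD3O

theorem pd3o_linear_convergence_general
    {𝒳 𝒰 : Type*} [NormedAddCommGroup 𝒳] [InnerProductSpace ℝ 𝒳] [CompleteSpace 𝒳]
    [NormedAddCommGroup 𝒰] [InnerProductSpace ℝ 𝒰] [CompleteSpace 𝒰]
    {K : 𝒳 →L[ℝ] 𝒰} {F R : 𝒳 → ℝ} {H : 𝒰 → ℝ} {F' : 𝒳 → 𝒳} {H' : 𝒰 → 𝒰}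
    {L_F L_H μF μR γ η : ℝ} {xstar rstar : 𝒳} (hLF : 0 < L_F)
    (hFgrad : ∀ z, HasGradientAt F (F' z) z)
    (hFlip : ∀ z z', ‖F' z - F' z'‖ ≤ L_F * ‖z - z'‖)
    (hμF : 0 ≤ μF) (hμR : 0 ≤ μR) (hμ : 0 < μF + μR)
    (hF : StrongConvexOn Set.univ μF F) (hR : StrongConvexOn Set.univ μR R)
    (hH : ConvexOn ℝ Set.univ H) (hLH : 0 < L_H) (hHgrad : ∀ v, HasGradientAt H (H' v) v)
    (hHlip : ∀ v v', ‖H' v - H' v'‖ ≤ L_H * ‖v - v'‖)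
    (hrstar : IsSubgradientAt R xstar rstar)
    (hopt : F' xstar + rstar + ContinuousLinearMap.adjoint K (H' (K xstar)) = 0)
    (hγ0 : 0 < γ) (hγ2 : γ < 2 / L_F) (hη : ‖K‖ ^ 2 ≤ η) :
    ∃ ρ : ℝ, 0 < ρ ∧ ρ ≤ 1 ∧ ∀ x q u, IsPD3O K F' R H γ η x q u → ∀ k : ℕ,
      ‖x (k + 1) - xstar‖ ^ 2
        ≤ (1 - ρ) ^ k *
          pd3oEnergy K γ η (γ • q 0 - xstar + γ • F' xstar) (u 0 - H' (K xstar)) := by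
  have hγL : γ * L_F < 2 := (lt_div_iff₀ hLF).1 hγ2
  have hη0 : 0 ≤ η := (sq_nonneg ‖K‖).trans hη
  obtain rfl : rstar = -(F' xstar + ContinuousLinearMap.adjoint K (H' (K xstar))) :=
    eq_neg_of_add_eq_zero_left (by rw [← hopt]; abel)
  set κ := γ * (2 - γ * L_F) * μF + 2 * γ * μR
  have hκ0 : 0 < κ := by
    have : 0 < 2 - γ * L_F := sub_pos.2 hγL
    rcases hμF.eq_or_lt with rfl | hμF
    · have : 0 < μR := by simpa using hμ
      positivity
    · positivity
  obtain ⟨c, hc, hcκ, hcη⟩ : ∃ c, 0 < c ∧ c ≤ κ / 2 ∧ c * (1 + γ * (η * L_H)) ≤ 1 :=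
    ⟨min (κ / 2) (1 / (1 + γ * (η * L_H))), by positivity, min_le_left _ _,
      (le_div_iff₀ (by positivity)).1 (min_le_right _ _)⟩
  refine ⟨c / (1 + c), by positivity, div_le_one_of_le₀ (by linarith) (by positivity),
    fun x q u h k => ?_⟩
  rw [show 1 - c / (1 + c) = (1 + c)⁻¹ by field_simp; ring]
  exact h.sq_norm_sub_le_inv_pow_mul hLF hFgrad hFlip hF hR hμF hμR hH hHgrad hLH hHlip hrstar
    hγ0 hγL.le hη hc.le (by linarith) (by linarith) k

/-- Theorem 5, first part: linear convergence of the PD3O algorithm when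
`μ_F + μ_R > 0` and `H` is `L_H`-smooth. -/
theorem pd3o_linear_convergence
    {𝒳 𝒰 : Type*}
    [NormedAddCommGroup 𝒳] [InnerProductSpace ℝ 𝒳] [FiniteDimensional ℝ 𝒳]
    [NormedAddCommGroup 𝒰] [InnerProductSpace ℝ 𝒰] [FiniteDimensional ℝ 𝒰]
    (K : 𝒳 →L[ℝ] 𝒰)
    (F R : 𝒳 → ℝ) (H : 𝒰 → ℝ) (F' : 𝒳 → 𝒳) (L_F : ℝ)
    (hLF : 0 < L_F)
    (hFconv : ConvexOn ℝ Set.univ F)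
    (hRconv : ConvexOn ℝ Set.univ R)
    (hHconv : ConvexOn ℝ Set.univ H)
    (hFgrad : ∀ z, HasGradientAt F (F' z) z)
    (hFlip : ∀ z z', ‖F' z - F' z'‖ ≤ L_F * ‖z - z'‖)
    -- strong convexity
    (μF μR : ℝ) (hμF : 0 ≤ μF) (hμR : 0 ≤ μR) (hμ : 0 < μF + μR)
    (hFsc : ConvexOn ℝ Set.univ fun z => F z - μF / 2 * ‖z‖ ^ 2)
    (hRsc : ConvexOn ℝ Set.univ fun z => R z - μR / 2 * ‖z‖ ^ 2)
    -- H is L_H-smooth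
    (H' : 𝒰 → 𝒰) (L_H : ℝ) (hLH : 0 < L_H)
    (hHgrad : ∀ v, HasGradientAt H (H' v) v)
    (hHlip : ∀ v v', ‖H' v - H' v'‖ ≤ L_H * ‖v - v'‖)
    -- x* is the (unique) minimizer of Ψ, and Assumption 1 holds
    (xstar : 𝒳)
    (hxstar : ∀ y, F xstar + R xstar + H (K xstar) ≤ F y + R y + H (K y))
    (rstar : 𝒳)
    (hrstar : IsSubgradientAt R xstar rstar)
    (hopt : F' xstar + rstar
      + (ContinuousLinearMap.adjoint K) (H' (K xstar)) = 0)
    -- u* is the (unique) dual solution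
    (ustar : 𝒰) (hustar : ustar = H' (K xstar))
    -- parameters
    (γ η : ℝ) (hγ0 : 0 < γ) (hγ2 : γ < 2 / L_F) (hη : ‖K‖ ^ 2 ≤ η)
    -- PD3O iterates
    (x q : ℕ → 𝒳) (u : ℕ → 𝒰)
    (hx : ∀ k, IsProxPt γ R
      (γ • (q k - (ContinuousLinearMap.adjoint K) (u k))) (x (k+1)))
    (hq : ∀ k, q (k+1) = (1/γ) • x (k+1) - F' (x (k+1)))
    (hu : ∀ k, ∃ p, IsProxPt (γ*η) H
        ((γ*η) • (u k + (1/η) • K ((1/γ) • x (k+1) + q (k+1) - q k))) p ∧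
      u (k+1) = (u k + (1/η) • K ((1/γ) • x (k+1) + q (k+1) - q k))
        - (1/(γ*η)) • p) :
    ∃ ρ : ℝ, 0 < ρ ∧ ρ ≤ 1 ∧ ∀ k : ℕ,
      ‖x (k+1) - xstar‖^2 ≤ (1 - ρ)^k *
        (‖γ • q 0 - xstar + γ • F' xstar
            - γ • (ContinuousLinearMap.adjoint K) (u 0 - ustar)‖^2
          + γ^2 * η * ‖u 0 - ustar‖^2
          - γ^2 * ‖(ContinuousLinearMap.adjoint K) (u 0 - ustar)‖^2) := by
  subst hustar
  obtain ⟨ρ, hρ0, hρ1, hρ⟩ := pd3o_linear_convergence_general hLF hFgrad hFlip hμF hμR hμ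
    (strongConvexOn_iff_convex.2 hFsc) (strongConvexOn_iff_convex.2 hRsc) hHconv hLH hHgrad hHlip
    hrstar hopt hγ0 hγ2 hη
  exact ⟨ρ, hρ0, hρ1, hρ x q u ⟨hx, hq, hu⟩⟩
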